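/- arXiv:1709.05728 — 7 statements merged into one kernel-verified Lean document; each statement's English description precedes it below -/
import Mathlib

section
/- Let R be a unital associative and commutative ring in which 3 is invertible, let A be a unital associative R-algebra, and let n be an integer with n > 2. Then the two-sided ideal of A generated by the set { [u, a_1, a_2] | u ∈ T^{(n-2)}(A), a_1, a_2 ∈ A } coincides with T^{(n)}(A). -/
/-!
Write `k = n - 2` and `[a₁, …, aₘ]` for left-normed commutators. The inclusion of `T⁽ᵏ⁺²⁾` in the
other ideal is immediate from `[a₁, …, aₖ₊₂] = [[a₁, …, aₖ], aₖ₊₁, aₖ₊₂]`. For the converse one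
passes to the quotient `B = A / T⁽ᵏ⁺²⁾`, where a commutator `v` of length `k` satisfies
`[v, p, q] = 0` for all `p, q`.

Modulo that relation, `[x v, a, b] = ([x, b] [v, a] + [x, a] [v, b]) + [x, a, b] v`. The bracketed
part vanishes by expanding `[v, a b, x] = 0` (`cm_mul_cm_add_swap`). The last term is trivially zero
if `k = 1`; otherwise it vanishes because `3` is invertible (`triple_mul_cm_eq_zero`): writing
`v = [w, q]`, the expansion of `[w, p q, r, s] = 0` shows that `[p, r, s] [w, q]` is skew-symmetric
in `p`, `q`, `r`, and combining this with the four Jacobi identities in three of the four letters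
gives `3 [p, r, s] [w, q] = 0`.

Finally, the elements `v` satisfying `[v, p, q] = 0` and `[x, a, b] v = 0` identically are stable
under `v ↦ [v, y]` (`isGood_cm`), so that `x v y = x y v + x [v, y]` reduces a general element of
`T⁽ᵏ⁾` to the case just treated.
-/

/-- The commutator `[a, b] = a * b - b * a`. -/
def cm {A : Type*} [Ring A] (a b : A) : A := a * b - b * a

/-- The left-normed commutator `[a₁, a₂, …, aₙ]` of a nonempty list of ring elements. -/
def commList {A : Type*} [Ring A] : List A → A
  | [] => 0
  | a :: l => l.foldl cm a

/-- `T⁽ⁿ⁾(A)`: the two-sided ideal of `A` generated by all left-normed commutators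
`[a₁, …, aₙ]` of `n` elements of `A`. -/
def Tideal (A : Type*) [Ring A] (n : ℕ) : TwoSidedIdeal A :=
  TwoSidedIdeal.span {x | ∃ a : Fin n → A, x = commList (List.ofFn a)}

section Ring

variable {B : Type*} [Ring B]

lemma cm_zero_left (a : B) : cm 0 a = 0 := by simp [cm]

lemma map_cm {C : Type*} [Ring C] (f : B →+* C) (a b : B) : f (cm a b) = cm (f a) (f b) := by
  simp [cm]

/-- If `[v, p, q] = 0` for all `p, q`, then `[v, a] [b, c]` is skew-symmetric in `a` and `b`. -/
lemma cm_mul_cm_add_swap {v : B} (hv : ∀ p q, cm (cm v p) q = 0) (a b c : B) :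
    cm v a * cm b c + cm v b * cm a c = 0 := by
  have e : cm v a * cm b c + cm v b * cm a c = cm (cm v (a * b)) c - a * cm (cm v b) c
      - cm (cm v a) c * b + (cm (cm (cm v b) a) c - cm (cm (cm v b) c) a) := by
    simp only [cm]; noncomm_ring
  rw [e]
  simp [hv, cm_zero_left]

/-- If `[w, p, q, r] = 0` for all `p, q, r`, then `[a, c, d] [w, b]` is skew-symmetric in
`a` and `b`. -/
lemma triple_mul_cm_add_swap {w : B} (hw : ∀ p q r, cm (cm (cm w p) q) r = 0) (a b c d : B) :
    cm (cm a c) d * cm w b + cm (cm b c) d * cm w a = 0 := by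
  have e : cm (cm a c) d * cm w b + cm (cm b c) d * cm w a =
      cm (cm (cm w (a * b)) c) d - a * cm (cm (cm w b) c) d - cm (cm (cm w a) c) d * b
      + (cm (cm w b) c * cm d a + cm (cm w b) d * cm c a)
      + cm (cm (cm w b) d) (cm a c) + cm (cm (cm w b) c) (cm a d)
      + (cm (cm w a) c * cm d b + cm (cm w a) d * cm c b)
      - (cm (cm (cm w a) (cm b c)) d - cm (cm (cm w a) d) (cm b c)) := by
    simp only [cm]; noncomm_ring
  rw [e, cm_mul_cm_add_swap (hw b), cm_mul_cm_add_swap (hw a)]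
  simp [hw]

/-- This is where the invertibility of `3` is used; it amounts to
`T⁽³⁾ T⁽ᵐ⁺¹⁾ ⊆ T⁽ᵐ⁺³⁾` for `w` a commutator of length `m`. -/
lemma triple_mul_cm_eq_zero (h3 : ∀ x : B, 3 * x = 0 → x = 0) {w : B}
    (hw : ∀ p q r, cm (cm (cm w p) q) r = 0) (a b c d : B) :
    cm (cm a c) d * cm w b = 0 := by
  have s1 : ∀ a b c d, cm (cm a c) d * cm w b + cm (cm b c) d * cm w a = 0 :=
    triple_mul_cm_add_swap hw
  have s2 : ∀ a b c d, cm (cm a c) d * cm w b + cm (cm c a) d * cm w b = 0 := by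
    intro a b c d
    simp only [cm]; noncomm_ring
  have j : ∀ a b c d, cm (cm a c) d * cm w b + cm (cm c d) a * cm w b
      + cm (cm d a) c * cm w b = 0 := by
    intro a b c d
    simp only [cm]; noncomm_ring
  apply h3
  -- From here on only the additive relations among the values of `F` matter.
  generalize hF : (fun a b c d : B => cm (cm a c) d * cm w b) = F
  have hF' : ∀ a b c d, cm (cm a c) d * cm w b = F a b c d := fun a b c d => by rw [← hF]
  simp only [hF'] at s1 s2 j ⊢
  clear hF hF' h3 hw
  -- The four values `F a b c d`, `F c b d a`, `F d b a c`, `F a c d b` represent all the others up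
  -- to sign, and the Jacobi identities say that the sum of any three of them vanishes.
  have j1 : F a b c d + F c b d a + F d b a c = 0 := j a b c d
  have j2 : F a b c d + F a c d b + F d b a c = 0 := by
    have := j b a c d
    grind
  have j3 : F a b c d + F c b d a + F a c d b = 0 := by
    have := j a c b d
    grind
  have j4 : F c b d a + F d b a c + F a c d b = 0 := by
    have := j a d c b
    grind
  have e : 3 * F a b c d = (F a b c d + F c b d a + F d b a c)
      + (F a b c d + F a c d b + F d b a c) + (F a b c d + F c b d a + F a c d b)
      - 2 • (F c b d a + F d b a c + F a c d b) := by
    noncomm_ring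
  rw [e, j1, j2, j3, j4]
  simp

/-- The two annihilation properties which, in `A / T⁽ᵏ⁺²⁾`, hold for the image of every commutator
of length `k`. -/
structure IsGood (v : B) : Prop where
  cm_cm : ∀ p q, cm (cm v p) q = 0
  mul : ∀ x a b, cm (cm x a) b * v = 0

lemma isGood_cm {v : B} (hv : IsGood v) (y : B) : IsGood (cm v y) where
  cm_cm p q := by rw [hv.cm_cm, cm_zero_left]
  mul x a b := by
    have e : cm (cm x a) b * cm v y =
        cm (cm x a) b * v * y - y * (cm (cm x a) b * v)
        - cm (cm (cm x a) b) y * v := by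
      simp only [cm]; noncomm_ring
    rw [e]
    simp [hv.mul]

lemma cm_cm_mul_of_isGood {v : B} (hv : IsGood v) (x a b : B) :
    cm (cm (x * v) a) b = 0 := by
  have e : cm (cm (x * v) a) b = x * cm (cm v a) b
      - (cm v a * cm b x + cm v b * cm a x)
      - cm (cm v a) (cm x b) - cm (cm v b) (cm x a)
      + cm (cm x a) b * v := by
    simp only [cm]; noncomm_ring
  rw [e, cm_mul_cm_add_swap hv.cm_cm, hv.mul]
  simp [hv.cm_cm]

lemma cm_cm_mul_mul_of_isGood {v : B} (hv : IsGood v) (x y a b : B) :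
    cm (cm (x * v * y) a) b = 0 := by
  have e : cm (cm (x * v * y) a) b =
      cm (cm (x * y * v) a) b + cm (cm (x * cm v y) a) b := by
    simp only [cm]; noncomm_ring
  rw [e, cm_cm_mul_of_isGood hv, cm_cm_mul_of_isGood (isGood_cm hv y), add_zero]

lemma commList_ofFn_snoc {m : ℕ} (a : Fin (m + 1) → B) (x : B) :
    commList (List.ofFn (Fin.snoc a x : Fin (m + 2) → B)) = cm (commList (List.ofFn a)) x := by
  rw [List.ofFn_succ_last]
  simp only [Fin.snoc_castSucc, Fin.snoc_last]
  rw [List.ofFn_succ]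
  simp [commList]

lemma commList_ofFn_succ {m : ℕ} (a : Fin (m + 2) → B) :
    commList (List.ofFn a) = cm (commList (List.ofFn (Fin.init a))) (a (Fin.last _)) := by
  rw [← commList_ofFn_snoc, Fin.snoc_init_self]

lemma commList_mem_Tideal {m : ℕ} (a : Fin m → B) : commList (List.ofFn a) ∈ Tideal B m :=
  TwoSidedIdeal.subset_span ⟨a, rfl⟩

end Ring

/-- Commutators of length `m + 1` become good modulo `T⁽ᵐ⁺³⁾`. -/
lemma isGood_mk_commList {A : Type*} [Ring A] (m : ℕ)
    (h3 : ∀ x : (Tideal A (m + 3)).ringCon.Quotient, 3 * x = 0 → x = 0) (a : Fin (m + 1) → A) :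
    IsGood ((Tideal A (m + 3)).ringCon.mk' (commList (List.ofFn a))) := by
  have hs := RingCon.mk'_surjective (Tideal A (m + 3)).ringCon
  have hz : ∀ z, (Tideal A (m + 3)).ringCon.mk' z = 0 ↔ z ∈ Tideal A (m + 3) := fun z => by
    rw [← TwoSidedIdeal.mem_ker, TwoSidedIdeal.ker_ringCon_mk']
  have hcm : ∀ (a : Fin (m + 1) → A) p q,
      cm (cm ((Tideal A (m + 3)).ringCon.mk' (commList (List.ofFn a))) p) q = 0 := by
    intro a p q
    obtain ⟨p, rfl⟩ := hs p
    obtain ⟨q, rfl⟩ := hs q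
    rw [← map_cm, ← map_cm, ← commList_ofFn_snoc, ← commList_ofFn_snoc, hz]
    exact commList_mem_Tideal _
  refine ⟨hcm a, fun x b c => ?_⟩
  cases m with
  | zero =>
    -- `[x, b, c]` itself lies in `T⁽³⁾`.
    obtain ⟨x, rfl⟩ := hs x
    have := hcm (fun _ => x) b c
    simp only [List.ofFn_succ, List.ofFn_zero, commList, List.foldl_nil] at this
    rw [this, zero_mul]
  | succ m =>
    rw [commList_ofFn_succ, map_cm]
    refine triple_mul_cm_eq_zero h3 (fun p q r => ?_) _ _ _ _
    obtain ⟨p, rfl⟩ := hs p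
    rw [← map_cm, ← commList_ofFn_snoc]
    exact hcm _ q r

theorem stmt_2 {R A : Type*} [CommRing R] [Ring A] [Algebra R A]
    (h3 : IsUnit (3 : R)) (n : ℕ) (hn : 2 < n) :
    TwoSidedIdeal.span
        {x | ∃ u ∈ Tideal A (n - 2), ∃ a₁ a₂ : A, x = cm (cm u a₁) a₂} =
      Tideal A n := by
  obtain ⟨m, rfl⟩ : ∃ m, n = m + 3 := ⟨n - 3, by omega⟩
  rw [show m + 3 - 2 = m + 1 by omega]
  apply le_antisymm
  · have h3' : ∀ x : (Tideal A (m + 3)).ringCon.Quotient, 3 * x = 0 → x = 0 := by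
      intro x hx
      have h : IsUnit (3 : (Tideal A (m + 3)).ringCon.Quotient) := by
        have := h3.map (((Tideal A (m + 3)).ringCon.mk').comp (algebraMap R A))
        rwa [map_ofNat] at this
      exact h.mul_right_eq_zero.1 hx
    rw [TwoSidedIdeal.span_le]
    rintro _ ⟨u, hu, a, b, rfl⟩
    rw [Tideal, TwoSidedIdeal.mem_span_iff_mem_addSubgroup_closure] at hu
    rw [SetLike.mem_coe]
    induction hu using AddSubgroup.closure_induction with
    | mem u hu =>
      obtain ⟨_, ⟨x, -, _, ⟨v, rfl⟩, rfl⟩, y, -, rfl⟩ := hu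
      have := cm_cm_mul_mul_of_isGood (isGood_mk_commList m h3' v) ((Tideal A (m + 3)).ringCon.mk' x)
        ((Tideal A (m + 3)).ringCon.mk' y) ((Tideal A (m + 3)).ringCon.mk' a)
        ((Tideal A (m + 3)).ringCon.mk' b)
      rwa [← map_mul, ← map_mul, ← map_cm, ← map_cm, ← TwoSidedIdeal.mem_ker,
        TwoSidedIdeal.ker_ringCon_mk'] at this
    | zero => simp [cm_zero_left]
    | add u v _ _ hu hv =>
      have e : cm (cm (u + v) a) b = cm (cm u a) b + cm (cm v a) b := by
        simp only [cm]; noncomm_ring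
      rw [e]
      exact add_mem hu hv
    | neg u _ hu =>
      have e : cm (cm (-u) a) b = -cm (cm u a) b := by
        simp only [cm]; noncomm_ring
      rw [e]
      exact neg_mem hu
  · rw [Tideal, TwoSidedIdeal.span_le]
    rintro _ ⟨a, rfl⟩
    rw [commList_ofFn_succ, commList_ofFn_succ]
    exact TwoSidedIdeal.subset_span ⟨_, commList_mem_Tideal _, _, _, rfl⟩
end

section
/- Let R be a unital associative and commutative ring, let A be a unital associative R-algebra generated (as a unital R-algebra) by a set X, and let S ⊆ A. Let I' be the two-sided ideal of A generated by all elements [s, x_1, x_2] and all elements [s, x_1][x_2, x_3] + [s, x_2][x_1, x_3], where s ∈ S and x_1, x_2, x_3 ∈ X. Then for every s ∈ S and all x_1, x_2, x_3, x_4 ∈ X, the element 3·[s, x_1][x_2, x_3, x_4] belongs to I'. In particular, if 3 is invertible in R, then [s, x_1][x_2, x_3, x_4] ∈ I'. -/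
/-- The vanishing of `[s, x] p + [s, y] q` is preserved by taking commutators with `z` once
`[s, x]` and `[s, y]` commute with `z`; with `p = [y, w]` and `q = [x, w]` this is the skew-symmetry
of `[s, x][y, w, z]` in `x` and `y`. -/
lemma cm_mul_cm_skew {B : Type*} [Ring B] {s x y w z : B}
    (hx : cm (cm s x) z = 0) (hy : cm (cm s y) z = 0)
    (h : cm s x * cm y w + cm s y * cm x w = 0) :
    cm s x * cm (cm y w) z = -(cm s y * cm (cm x w) z) := by
  generalize cm s x = u at *
  generalize cm s y = v at *
  generalize cm y w = p at *
  generalize cm x w = q at *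
  simp only [cm] at *
  -- `[u p + v q, z] = u [p, z] + v [q, z] + [u, z] p + [v, z] q`
  have key : u * (p * z - z * p) + v * (q * z - z * q) =
      (u * p + v * q) * z - z * (u * p + v * q)
        - (u * z - z * u) * p - (v * z - z * v) * q := by noncomm_ring
  rw [hx, hy, h] at key
  exact eq_neg_of_add_eq_zero_left (by simpa using key)

/-- On a set `Y`, a four-argument function with values in an abelian group is killed by `3` if it is
skew-symmetric in its first three arguments and satisfies the Jacobi identity in its last three. Only
the skew-symmetry in the first two arguments is restricted to `Y`. -/
lemma three_nsmul_eq_zero_of_skew_of_jacobi {B M : Type*} [AddCommGroup M] {Y : Set B}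
    {g : B → B → B → B → M}
    (skew₁₂ : ∀ a ∈ Y, ∀ b ∈ Y, ∀ c ∈ Y, ∀ d ∈ Y, g a b c d = -g b a c d)
    (skew₂₃ : ∀ a b c d, g a b c d = -g a c b d)
    (jacobi : ∀ a b c d, g a b c d + g a c d b + g a d b c = 0)
    {a b c d : B} (ha : a ∈ Y) (hb : b ∈ Y) (hc : c ∈ Y) (hd : d ∈ Y) :
    3 • g a b c d = 0 := by
  -- After skew-symmetry, the left-hand sides satisfy `j₁ + j₂ + j₃ + 2 • j₄ = 3 • g a b c d`.
  have j₁ := jacobi a b c d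
  have j₂ := jacobi b c a d
  have j₃ := jacobi c a b d
  have j₄ := jacobi d a b c
  grind

theorem stmt_4 {R A : Type*} [CommRing R] [Ring A] [Algebra R A]
    (X : Set A) (hX : Algebra.adjoin R X = ⊤) (S : Set A)
    (I' : TwoSidedIdeal A)
    (hI' : I' = TwoSidedIdeal.span (
      {a | ∃ s ∈ S, ∃ x₁ ∈ X, ∃ x₂ ∈ X, a = cm (cm s x₁) x₂} ∪
      {a | ∃ s ∈ S, ∃ x₁ ∈ X, ∃ x₂ ∈ X, ∃ x₃ ∈ X,
        a = cm s x₁ * cm x₂ x₃ + cm s x₂ * cm x₁ x₃})) :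
    ∀ s ∈ S, ∀ x₁ ∈ X, ∀ x₂ ∈ X, ∀ x₃ ∈ X, ∀ x₄ ∈ X,
      3 • (cm s x₁ * cm (cm x₂ x₃) x₄) ∈ I' ∧
      (IsUnit (3 : R) → cm s x₁ * cm (cm x₂ x₃) x₄ ∈ I') := by
  intro s hs x₁ h₁ x₂ h₂ x₃ h₃ x₄ h₄
  let π : A →+* I'.ringCon.Quotient := I'.ringCon.mk'
  have hπ : ∀ a, a ∈ I' ↔ π a = 0 := fun a => by
    rw [TwoSidedIdeal.mem_iff, ← RingCon.eq]; rfl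
  have π_cm : ∀ a b, π (cm a b) = cm (π a) (π b) := fun a b => by simp [cm]
  have central : ∀ x ∈ X, ∀ y ∈ X, cm (cm (π s) (π x)) (π y) = 0 := by
    intro x hx y hy
    rw [← π_cm, ← π_cm, ← hπ, hI']
    exact TwoSidedIdeal.subset_span (.inl ⟨s, hs, x, hx, y, hy, rfl⟩)
  have skew : ∀ x ∈ X, ∀ y ∈ X, ∀ z ∈ X,
      cm (π s) (π x) * cm (π y) (π z) + cm (π s) (π y) * cm (π x) (π z) = 0 := by
    intro x hx y hy z hz
    simp only [← π_cm, ← map_mul, ← map_add]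
    rw [← hπ, hI']
    exact TwoSidedIdeal.subset_span (.inr ⟨s, hs, x, hx, y, hy, z, hz, rfl⟩)
  have three : 3 • (cm s x₁ * cm (cm x₂ x₃) x₄) ∈ I' := by
    rw [hπ, map_nsmul]
    refine three_nsmul_eq_zero_of_skew_of_jacobi (Y := X)
      (g := fun a b c d => π (cm s a * cm (cm b c) d)) ?_ ?_ ?_ h₁ h₂ h₃ h₄
    · intro a ha b hb c hc d hd
      simp only [map_mul, π_cm]
      exact cm_mul_cm_skew (central a ha d hd) (central b hb d hd) (skew a ha b hb c hc)
    · intro a b c d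
      rw [← map_neg]
      congr 1
      simp only [cm]
      noncomm_ring
    · intro a b c d
      rw [← map_add, ← map_add, ← map_zero π]
      congr 1
      simp only [cm]
      noncomm_ring
  refine ⟨three, fun ⟨u, hu⟩ => ?_⟩
  -- Multiply by the image in `A` of the inverse of `3`.
  have hinv : algebraMap R A ↑u⁻¹ * 3 = 1 := by
    rw [← map_ofNat (algebraMap R A) 3, ← map_mul, ← hu, Units.inv_mul, map_one]
  have := I'.mul_mem_left (algebraMap R A ↑u⁻¹) _ three
  rwa [nsmul_eq_mul, Nat.cast_ofNat, ← mul_assoc, hinv, one_mul] at this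
end

section
/- Let R be a unital associative and commutative ring, let A be an associative R-algebra, let n > 2, and let u = [b_1, b_2, ..., b_{n-2}] for some b_1, ..., b_{n-2} ∈ A. Then for all a_1, a_2, a_3 ∈ A, the element [u, a_1][a_2, a_3] + [u, a_2][a_1, a_3] belongs to T^{(n)}(A). -/
theorem commList_concat {A : Type*} [Ring A] (l : List A) (hl : l ≠ []) (x : A) :
    commList (l ++ [x]) = cm (commList l) x := by
  cases l with
  | nil => exact absurd rfl hl
  | cons a l => simp [commList]

theorem cm_cm_mem {A : Type*} [Ring A] (m : ℕ) (hm : 0 < m) (b : Fin m → A) (x y : A) :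
    cm (cm (commList (List.ofFn b)) x) y ∈ Tideal A (m + 2) := by
  refine TwoSidedIdeal.subset_span
    ⟨Fin.snoc (α := fun _ => A) (Fin.snoc (α := fun _ => A) b x) y, ?_⟩
  have hb : List.ofFn b ≠ [] := by
    rw [Ne, List.ofFn_eq_nil_iff]
    omega
  rw [List.ofFn_succ', List.ofFn_succ']
  simp only [Fin.snoc_castSucc, Fin.snoc_last, List.concat_eq_append]
  rw [commList_concat _ (by simp), commList_concat _ hb]

theorem stmt_11 {R A : Type*} [CommRing R] [Ring A] [Algebra R A]
    (n : ℕ) (hn : 2 < n) (b : Fin (n - 2) → A) (u : A)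
    (hu : u = commList (List.ofFn b)) :
    ∀ a₁ a₂ a₃ : A,
      cm u a₁ * cm a₂ a₃ + cm u a₂ * cm a₁ a₃ ∈ Tideal A n := by
  intro a₁ a₂ a₃
  have key : ∀ x y : A, cm (cm u x) y ∈ Tideal A n := by
    intro x y
    have h := cm_cm_mem (n - 2) (by omega) b x y
    rwa [← hu, Nat.sub_add_cancel hn.le] at h
  have e : cm u a₁ * cm a₂ a₃ + cm u a₂ * cm a₁ a₃ =
      cm (cm u (a₁ * a₂)) a₃ - a₁ * cm (cm u a₂) a₃ - cm (cm u a₁) a₃ * a₂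
        + cm (cm u a₂) (cm a₁ a₃) := by
    simp only [cm]
    noncomm_ring
  rw [e]
  exact (Tideal A n).add_mem
    ((Tideal A n).sub_mem
      ((Tideal A n).sub_mem (key _ _) ((Tideal A n).mul_mem_left _ _ (key _ _)))
      ((Tideal A n).mul_mem_right _ _ (key _ _)))
    (key _ _)
end

section
/- Let R be a unital associative and commutative ring, let A be a unital associative R-algebra, let U be a two-sided ideal of A, and let W be the two-sided ideal of A generated by { [u, a_1, a_2] | u ∈ U, a_1, a_2 ∈ A }. Then for all u ∈ U and all a_1, a_2, a_3 ∈ A, the element u·[a_1, a_2, a_3] belongs to W. -/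
/-- The key identity. Expanding by the Leibniz rule,
`[uv, a, b] = [u, a, b]v + [u, a][v, b] + [u, b][v, a] + u[v, a, b]`; the two middle terms together
are symmetric in `a, b`, so they cancel on antisymmetrizing, and the Jacobi identity
`[v, a, b] - [v, b, a] = [v, [a, b]]` leaves `u[[a, b], v]` in terms of elements `[u', x, y]`
with `u'` in the ideal generated by `u`. -/
theorem mul_cm_cm_eq {A : Type*} [Ring A] (u a b v : A) :
    u * cm (cm a b) v =
      (cm (cm (u * v) b) a - cm (cm (u * v) a) b) +
        (cm (cm u a) b * v - cm (cm u b) a * v) := by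
  unfold cm
  noncomm_ring

theorem stmt_13 {R A : Type*} [CommRing R] [Ring A] [Algebra R A]
    (U : TwoSidedIdeal A) (W : TwoSidedIdeal A)
    (hW : W = TwoSidedIdeal.span {w | ∃ u ∈ U, ∃ a₁ a₂ : A, w = cm (cm u a₁) a₂}) :
    ∀ u ∈ U, ∀ a₁ a₂ a₃ : A, u * cm (cm a₁ a₂) a₃ ∈ W := by
  intro u hu a b v
  have gen : ∀ x ∈ U, ∀ y z : A, cm (cm x y) z ∈ W := fun x hx y z ↦
    hW ▸ TwoSidedIdeal.subset_span ⟨x, hx, y, z, rfl⟩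
  have huv : u * v ∈ U := U.mul_mem_right _ _ hu
  rw [mul_cm_cm_eq]
  exact W.add_mem (W.sub_mem (gen _ huv _ _) (gen _ huv _ _))
    (W.sub_mem (W.mul_mem_right _ _ (gen _ hu _ _)) (W.mul_mem_right _ _ (gen _ hu _ _)))
end

section
/- Let R be a unital associative and commutative ring, let A be a unital associative R-algebra, let U be a two-sided ideal of A, and let W be the two-sided ideal of A generated by { [u, a_1, a_2] | u ∈ U, a_1, a_2 ∈ A }. Then for all u ∈ U and all a_1, a_2, a_3, a_4 ∈ A, the element u·([a_1, a_2][a_3, a_4] + [a_1, a_3][a_2, a_4]) belongs to W. -/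
theorem cm_mul_cm_add_mem {A : Type*} [Ring A] {W : TwoSidedIdeal A} {u : A}
    (h : ∀ a b : A, cm (cm u a) b ∈ W) (a b c : A) :
    cm u b * cm a c + cm u a * cm b c ∈ W := by
  have e : cm u b * cm a c + cm u a * cm b c =
      cm (cm u (a * b)) c - a * cm (cm u b) c - cm (cm u a) c * b
        + cm (cm u b) (cm a c) := by
    simp only [cm]; noncomm_ring
  rw [e]
  exact W.add_mem (W.sub_mem (W.sub_mem (h _ _) (W.mul_mem_left _ _ (h _ _)))
    (W.mul_mem_right _ _ (h _ _))) (h _ _)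

theorem stmt_14 {R A : Type*} [CommRing R] [Ring A] [Algebra R A]
    (U : TwoSidedIdeal A) (W : TwoSidedIdeal A)
    (hW : W = TwoSidedIdeal.span {w | ∃ u ∈ U, ∃ a₁ a₂ : A, w = cm (cm u a₁) a₂}) :
    ∀ u ∈ U, ∀ a₁ a₂ a₃ a₄ : A,
      u * (cm a₁ a₂ * cm a₃ a₄ + cm a₁ a₃ * cm a₂ a₄) ∈ W := by
  intro u hu x b a c
  have h : ∀ v ∈ U, ∀ a b : A, cm (cm v a) b ∈ W := fun v hv a b => by
    rw [hW]
    exact TwoSidedIdeal.subset_span ⟨v, hv, a, b, rfl⟩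
  have e : u * (cm x b * cm a c + cm x a * cm b c) =
      (cm (u * x) b * cm a c + cm (u * x) a * cm b c)
        - x * (cm u b * cm a c + cm u a * cm b c)
        - cm (cm u b) x * cm a c - cm (cm u a) x * cm b c := by
    simp only [cm]; noncomm_ring
  rw [e]
  exact W.sub_mem (W.sub_mem (W.sub_mem
    (cm_mul_cm_add_mem (h _ (U.mul_mem_right _ _ hu)) a b c)
    (W.mul_mem_left _ _ (cm_mul_cm_add_mem (h u hu) a b c)))
    (W.mul_mem_right _ _ (h u hu _ _))) (W.mul_mem_right _ _ (h u hu _ _))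
end

section
/- Let R be a unital associative and commutative ring, let A be a unital associative R-algebra generated (as a unital R-algebra) by a set X, and let S ⊆ A. Let I be the two-sided ideal of A generated by the following elements, where s ranges over S and x_1, x_2, x_3, x_4, x_5 range over X: [s, x_1, x_2]; s[x_1, x_2, x_3]; [s, x_1][x_2, x_3, x_4]; [s, x_1][x_2, x_3] + [s, x_2][x_1, x_3]; and s([x_1, x_2][x_3, x_4] + [x_1, x_3][x_2, x_4]). Then for all s ∈ S and all x_1, x_2, x_3, x_4, x_5 ∈ X, the element [s, x_1]([x_2, x_3][x_4, x_5] + [x_2, x_4][x_3, x_5]) belongs to I. -/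
/-- If `p` commutes with `b` and `c` modulo `I` and `p * [y, b]`, `p * [y, c]` lie in `I`, then
`p * [y, [b, c]]` lies in `I`: expand `[y, [b, c]] = [[y, b], c] - [[y, c], b]` by the Jacobi
identity. -/
theorem cm_mul_cm_cm_mem {A : Type*} [Ring A] (I : TwoSidedIdeal A) {p y b c : A}
    (hb : cm p b ∈ I) (hc : cm p c ∈ I) (hyb : p * cm y b ∈ I) (hyc : p * cm y c ∈ I) :
    p * cm y (cm b c) ∈ I := by
  have key : p * cm y (cm b c) =
      (p * cm y b * c - cm p c * cm y b - c * (p * cm y b)) -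
        (p * cm y c * b - cm p b * cm y c - b * (p * cm y c)) := by
    simp only [cm]; noncomm_ring
  rw [key]
  exact I.sub_mem
    (I.sub_mem (I.sub_mem (I.mul_mem_right _ _ hyb) (I.mul_mem_right _ _ hc))
      (I.mul_mem_left _ _ hyb))
    (I.sub_mem (I.sub_mem (I.mul_mem_right _ _ hyc) (I.mul_mem_right _ _ hb))
      (I.mul_mem_left _ _ hyc))

/-- Skew-symmetry of `[s, a] [b, c] [d, e]` in `a` and `d` modulo `I`. -/
theorem cm_mul_cm_mul_cm_swap_mem {A : Type*} [Ring A] (I : TwoSidedIdeal A) {X : Set A} {s : A}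
    (h₁ : ∀ x ∈ X, ∀ y ∈ X, cm (cm s x) y ∈ I)
    (h₃ : ∀ x ∈ X, ∀ y ∈ X, ∀ z ∈ X, ∀ w ∈ X, cm s x * cm (cm y z) w ∈ I)
    (h₄ : ∀ x ∈ X, ∀ y ∈ X, ∀ z ∈ X, cm s x * cm y z + cm s y * cm x z ∈ I)
    {a b c d e : A} (ha : a ∈ X) (hb : b ∈ X) (hc : c ∈ X) (hd : d ∈ X) (he : e ∈ X) :
    cm s a * cm b c * cm d e + cm s d * cm b c * cm a e ∈ I := by
  have key : cm s a * cm b c * cm d e + cm s d * cm b c * cm a e =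
      (cm s a * cm d e + cm s d * cm a e) * cm b c -
        cm s a * cm (cm d e) (cm b c) - cm s d * cm (cm a e) (cm b c) := by
    generalize cm s a = p, cm s d = q, cm b c = u, cm d e = v, cm a e = w
    simp only [cm]; noncomm_ring
  rw [key]
  exact I.sub_mem
    (I.sub_mem (I.mul_mem_right _ _ (h₄ a ha d hd e he))
      (cm_mul_cm_cm_mem I (h₁ a ha b hb) (h₁ a ha c hc) (h₃ a ha d hd e he b hb)
        (h₃ a ha d hd e he c hc)))
    (cm_mul_cm_cm_mem I (h₁ d hd b hb) (h₁ d hd c hc) (h₃ d hd a ha e he b hb)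
      (h₃ d hd a ha e he c hc))

theorem stmt_15 {R A : Type*} [CommRing R] [Ring A] [Algebra R A]
    (X : Set A) (hX : Algebra.adjoin R X = ⊤) (S : Set A)
    (I : TwoSidedIdeal A)
    (hI : I = TwoSidedIdeal.span (
      {a | ∃ s ∈ S, ∃ x₁ ∈ X, ∃ x₂ ∈ X, a = cm (cm s x₁) x₂} ∪
      {a | ∃ s ∈ S, ∃ x₁ ∈ X, ∃ x₂ ∈ X, ∃ x₃ ∈ X, a = s * cm (cm x₁ x₂) x₃} ∪
      {a | ∃ s ∈ S, ∃ x₁ ∈ X, ∃ x₂ ∈ X, ∃ x₃ ∈ X, ∃ x₄ ∈ X,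
        a = cm s x₁ * cm (cm x₂ x₃) x₄} ∪
      {a | ∃ s ∈ S, ∃ x₁ ∈ X, ∃ x₂ ∈ X, ∃ x₃ ∈ X,
        a = cm s x₁ * cm x₂ x₃ + cm s x₂ * cm x₁ x₃} ∪
      {a | ∃ s ∈ S, ∃ x₁ ∈ X, ∃ x₂ ∈ X, ∃ x₃ ∈ X, ∃ x₄ ∈ X,
        a = s * (cm x₁ x₂ * cm x₃ x₄ + cm x₁ x₃ * cm x₂ x₄)})) :
    ∀ s ∈ S, ∀ x₁ ∈ X, ∀ x₂ ∈ X, ∀ x₃ ∈ X, ∀ x₄ ∈ X, ∀ x₅ ∈ X,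
      cm s x₁ * (cm x₂ x₃ * cm x₄ x₅ + cm x₂ x₄ * cm x₃ x₅) ∈ I := by
  intro s hs a ha b hb c hc d hd e he
  have h₁ : ∀ x ∈ X, ∀ y ∈ X, cm (cm s x) y ∈ I := fun x hx y hy => by
    rw [hI]
    exact TwoSidedIdeal.subset_span (.inl (.inl (.inl (.inl ⟨s, hs, x, hx, y, hy, rfl⟩))))
  have h₃ : ∀ x ∈ X, ∀ y ∈ X, ∀ z ∈ X, ∀ w ∈ X, cm s x * cm (cm y z) w ∈ I :=
    fun x hx y hy z hz w hw => by
      rw [hI]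
      exact TwoSidedIdeal.subset_span
        (.inl (.inl (.inr ⟨s, hs, x, hx, y, hy, z, hz, w, hw, rfl⟩)))
  have h₄ : ∀ x ∈ X, ∀ y ∈ X, ∀ z ∈ X, cm s x * cm y z + cm s y * cm x z ∈ I :=
    fun x hx y hy z hz => by
      rw [hI]
      exact TwoSidedIdeal.subset_span (.inl (.inr ⟨s, hs, x, hx, y, hy, z, hz, rfl⟩))
  -- With `g(a, b, c, d, e) = [s, a] [b, c] [d, e]`, the sign changes along
  -- `g(a, b, c, d, e) = -g(a, c, b, d, e) ≡ g(c, a, b, d, e) ≡ -g(d, a, b, c, e)`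
  -- `≡ g(a, d, b, c, e) = -g(a, b, d, c, e)` telescope to the following identity.
  have key : cm s a * (cm b c * cm d e + cm b d * cm c e) =
      (cm s c * cm a b * cm d e + cm s d * cm a b * cm c e) -
        (cm s a * cm c b + cm s c * cm a b) * cm d e -
        (cm s d * cm a b + cm s a * cm d b) * cm c e := by
    have skew (x y : A) : cm x y = -cm y x := (neg_sub _ _).symm
    rw [skew c b, skew d b]
    noncomm_ring
  rw [key]
  exact I.sub_mem
    (I.sub_mem (cm_mul_cm_mul_cm_swap_mem I h₁ h₃ h₄ hc ha hb hd he)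
      (I.mul_mem_right _ _ (h₄ a ha c hc b hb)))
    (I.mul_mem_right _ _ (h₄ d hd a ha b hb))
end

section
/- Let R be a unital associative and commutative ring, let A be a unital associative R-algebra generated (as a unital R-algebra) by a set X, and let S ⊆ A. Let M = { x_1 ⋯ x_k | k ≥ 0, x_i ∈ X } be the set of all finite products of elements of X (including the empty product 1). Let I be the two-sided ideal of A generated by the following elements, where s ranges over S and x_1, x_2, x_3, x_4, x_5 range over X: [s, x_1, x_2]; s[x_1, x_2, x_3]; [s, x_1][x_2, x_3, x_4]; [s, x_1][x_2, x_3] + [s, x_2][x_1, x_3]; and s([x_1, x_2][x_3, x_4] + [x_1, x_3][x_2, x_4]). Then for all s ∈ S, all b ∈ M, and all x_1, x_2, x_3 ∈ X, the element [s, x_1][b, x_2, x_3] belongs to I. -/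
section

variable {A : Type*} [Ring A] {X : Set A} {I : TwoSidedIdeal A}

/-- The exchange relation passes from `s` to `[s, x]`: up to the terms `s[f, x]`, which lie in `I`
because `[s, [a, b]]` and `s[a, b, c]` do, it is the commutator of `s f` with `x`. -/
lemma commutator_exchange_mem {s : A}
    (h₁ : ∀ a ∈ X, ∀ b ∈ X, cm (cm s a) b ∈ I)
    (h₂ : ∀ a ∈ X, ∀ b ∈ X, ∀ c ∈ X, s * cm (cm a b) c ∈ I)
    (h₃ : ∀ a ∈ X, ∀ b ∈ X, ∀ c ∈ X, ∀ d ∈ X,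
      s * (cm a b * cm c d + cm a c * cm b d) ∈ I)
    {x a b c d : A} (hx : x ∈ X) (ha : a ∈ X) (hb : b ∈ X) (hc : c ∈ X) (hd : d ∈ X) :
    cm s x * (cm a b * cm c d + cm a c * cm b d) ∈ I := by
  have hcomm : ∀ p ∈ X, ∀ q ∈ X, cm s (cm p q) ∈ I := by
    intro p hp q hq
    have e : cm s (cm p q) = cm (cm s p) q - cm (cm s q) p := by
      simp only [cm]; noncomm_ring
    rw [e]
    exact I.sub_mem (h₁ p hp q hq) (h₁ q hq p hp)
  have hprod : ∀ p ∈ X, ∀ q ∈ X, ∀ r ∈ X, ∀ t ∈ X, s * cm (cm p q * cm r t) x ∈ I := by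
    intro p hp q hq r hr t ht
    have e : s * cm (cm p q * cm r t) x
        = s * cm (cm p q) x * cm r t
          + (cm p q * (s * cm (cm r t) x) + cm s (cm p q) * cm (cm r t) x) := by
      simp only [cm]; noncomm_ring
    rw [e]
    exact I.add_mem (I.mul_mem_right _ _ (h₂ p hp q hq x hx))
      (I.add_mem (I.mul_mem_left _ _ (h₂ r hr t ht x hx))
        (I.mul_mem_right _ _ (hcomm p hp q hq)))
  have e : ∀ f g : A, cm s x * (f + g)
      = s * (f + g) * x - x * (s * (f + g)) - (s * cm f x + s * cm g x) := by
    intro f g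
    simp only [cm]; noncomm_ring
  rw [e]
  have h := h₃ a ha b hb c hc d hd
  exact I.sub_mem (I.sub_mem (I.mul_mem_right _ _ h) (I.mul_mem_left _ _ h))
    (I.add_mem (hprod a ha b hb c hc d hd) (hprod a ha c hc b hb d hd))

/-- The symmetrized product `u([y, p][b, q] + [y, q][b, p])` lies in `I` for every monomial `b`. -/
lemma symmetrized_mem {u : A}
    (hu : ∀ x ∈ X, cm u x ∈ I)
    (hu₂ : ∀ a ∈ X, ∀ b ∈ X, ∀ c ∈ X, u * cm (cm a b) c ∈ I)
    (hu₃ : ∀ a ∈ X, ∀ b ∈ X, ∀ c ∈ X, ∀ d ∈ X,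
      u * (cm a b * cm c d + cm a c * cm b d) ∈ I)
    {y p q : A} (hy : y ∈ X) (hp : p ∈ X) (hq : q ∈ X)
    {b : A} (hb : b ∈ Submonoid.closure X) :
    u * (cm y p * cm b q + cm y q * cm b p) ∈ I := by
  induction hb using Submonoid.closure_induction_left with
  | one => simp [cm, I.zero_mem]
  | mul_left z hz b _ ih =>
    -- Exchanging `p`, `z` in one term and `q`, `z` in the other leaves
    -- `-u[y, z]([p, q] + [q, p]) = 0`.
    have hz' : u * (cm y p * cm z q + cm y q * cm z p) ∈ I := by
      have e : u * (cm y p * cm z q + cm y q * cm z p)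
          = u * (cm y p * cm z q + cm y z * cm p q)
            + u * (cm y q * cm z p + cm y z * cm q p) := by
        simp only [cm]; noncomm_ring
      rw [e]
      exact I.add_mem (hu₃ y hy p hp z hz q hq) (hu₃ y hy q hq z hz p hp)
    -- After `[zb, q] = [z, q]b + z[b, q]`, the factor `z` is moved to the far left.
    have e : u * (cm y p * cm (z * b) q + cm y q * cm (z * b) p)
        = u * (cm y p * cm z q + cm y q * cm z p) * b
          + (u * cm (cm y p) z * cm b q + u * cm (cm y q) z * cm b p)
          + (cm u z * (cm y p * cm b q + cm y q * cm b p)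
            + z * (u * (cm y p * cm b q + cm y q * cm b p))) := by
      simp only [cm]; noncomm_ring
    rw [e]
    exact I.add_mem
      (I.add_mem (I.mul_mem_right _ _ hz')
        (I.add_mem (I.mul_mem_right _ _ (hu₂ y hy p hp z hz))
          (I.mul_mem_right _ _ (hu₂ y hy q hq z hz))))
      (I.add_mem (I.mul_mem_right _ _ (hu z hz)) (I.mul_mem_left _ _ ih))

end

theorem stmt_16 {R A : Type*} [CommRing R] [Ring A] [Algebra R A]
    (X : Set A) (hX : Algebra.adjoin R X = ⊤) (S : Set A)
    (I : TwoSidedIdeal A)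
    (hI : I = TwoSidedIdeal.span (
      {a | ∃ s ∈ S, ∃ x₁ ∈ X, ∃ x₂ ∈ X, a = cm (cm s x₁) x₂} ∪
      {a | ∃ s ∈ S, ∃ x₁ ∈ X, ∃ x₂ ∈ X, ∃ x₃ ∈ X, a = s * cm (cm x₁ x₂) x₃} ∪
      {a | ∃ s ∈ S, ∃ x₁ ∈ X, ∃ x₂ ∈ X, ∃ x₃ ∈ X, ∃ x₄ ∈ X,
        a = cm s x₁ * cm (cm x₂ x₃) x₄} ∪
      {a | ∃ s ∈ S, ∃ x₁ ∈ X, ∃ x₂ ∈ X, ∃ x₃ ∈ X,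
        a = cm s x₁ * cm x₂ x₃ + cm s x₂ * cm x₁ x₃} ∪
      {a | ∃ s ∈ S, ∃ x₁ ∈ X, ∃ x₂ ∈ X, ∃ x₃ ∈ X, ∃ x₄ ∈ X,
        a = s * (cm x₁ x₂ * cm x₃ x₄ + cm x₁ x₃ * cm x₂ x₄)})) :
    ∀ s ∈ S, ∀ b ∈ Submonoid.closure X, ∀ x₁ ∈ X, ∀ x₂ ∈ X, ∀ x₃ ∈ X,
      cm s x₁ * cm (cm b x₂) x₃ ∈ I := by
  intro s hs b hb x hx p hp q hq
  have h₁ : ∀ a ∈ X, ∀ b ∈ X, cm (cm s a) b ∈ I := by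
    intro a ha b hb
    rw [hI]
    exact TwoSidedIdeal.subset_span
      (Or.inl (Or.inl (Or.inl (Or.inl ⟨s, hs, a, ha, b, hb, rfl⟩))))
  have h₂ : ∀ a ∈ X, ∀ b ∈ X, ∀ c ∈ X, s * cm (cm a b) c ∈ I := by
    intro a ha b hb c hc
    rw [hI]
    exact TwoSidedIdeal.subset_span
      (Or.inl (Or.inl (Or.inl (Or.inr ⟨s, hs, a, ha, b, hb, c, hc, rfl⟩))))
  have hu₂ : ∀ a ∈ X, ∀ b ∈ X, ∀ c ∈ X, cm s x * cm (cm a b) c ∈ I := by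
    intro a ha b hb c hc
    rw [hI]
    exact TwoSidedIdeal.subset_span
      (Or.inl (Or.inl (Or.inr ⟨s, hs, x, hx, a, ha, b, hb, c, hc, rfl⟩)))
  have h₃ : ∀ a ∈ X, ∀ b ∈ X, ∀ c ∈ X, ∀ d ∈ X,
      s * (cm a b * cm c d + cm a c * cm b d) ∈ I := by
    intro a ha b hb c hc d hd
    rw [hI]
    exact TwoSidedIdeal.subset_span
      (Or.inr ⟨s, hs, a, ha, b, hb, c, hc, d, hd, rfl⟩)
  induction hb using Submonoid.closure_induction_left with
  | one => simp [cm, I.zero_mem]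
  | mul_left y hy b hb ih =>
    have e : cm s x * cm (cm (y * b) p) q
        = cm s x * cm (cm y p) q * b
          + cm s x * (cm y p * cm b q + cm y q * cm b p)
          + (cm (cm s x) y * cm (cm b p) q + y * (cm s x * cm (cm b p) q)) := by
      generalize cm s x = u
      simp only [cm]; noncomm_ring
    rw [e]
    exact I.add_mem
      (I.add_mem (I.mul_mem_right _ _ (hu₂ y hy p hp q hq))
        (symmetrized_mem (h₁ x hx) hu₂
          (fun a ha b hb c hc d hd => commutator_exchange_mem h₁ h₂ h₃ hx ha hb hc hd)
          hy hp hq hb))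
      (I.add_mem (I.mul_mem_right _ _ (h₁ x hx y hy)) (I.mul_mem_left _ _ ih))
end
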